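/- arXiv:2605.16907 — 3 statements merged into one kernel-verified Lean document; each statement's English description precedes it below -/
import Mathlib

section
/- The Bessel function J₀ is differentiable on ℝ and its derivative is −J₁; that is, for every real x, the function x ↦ (1/π)∫₀^π cos(x sin θ) dθ has derivative at x equal to −(1/π)∫₀^π cos(θ − x sin θ) dθ. -/
open Real

/-- Bessel function of the first kind of order 0, via its integral representation. -/
noncomputable def besselJ0 (x : ℝ) : ℝ :=
  (1 / π) * ∫ θ in (0:ℝ)..π, Real.cos (x * Real.sin θ)

/-- Bessel function of the first kind of order 1, via its integral representation. -/
noncomputable def besselJ1 (x : ℝ) : ℝ :=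
  (1 / π) * ∫ θ in (0:ℝ)..π, Real.cos (θ - x * Real.sin θ)

/-- The integrand `cos θ * cos (x * sin θ)` is odd under the reflection `θ ↦ π - θ`. -/
theorem integral_cos_mul_cos_mul_sin (x : ℝ) :
    ∫ θ in (0:ℝ)..π, Real.cos θ * Real.cos (x * Real.sin θ) = 0 := by
  have h := intervalIntegral.integral_comp_sub_left (a := 0) (b := π)
    (fun θ => Real.cos θ * Real.cos (x * Real.sin θ)) π
  simp only [Real.cos_pi_sub, Real.sin_pi_sub, neg_mul, intervalIntegral.integral_neg,
    sub_self, sub_zero] at h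
  linarith

theorem integral_cos_sub_mul_sin (x : ℝ) :
    ∫ θ in (0:ℝ)..π, Real.cos (θ - x * Real.sin θ) =
      ∫ θ in (0:ℝ)..π, Real.sin θ * Real.sin (x * Real.sin θ) := by
  simp only [Real.cos_sub]
  rw [intervalIntegral.integral_add, integral_cos_mul_cos_mul_sin, zero_add] <;>
    exact Continuous.intervalIntegrable (by fun_prop) _ _

/-- Differentiation under the integral sign, with the derivative bounded by `1`. -/
theorem hasDerivAt_integral_cos_mul_sin (x : ℝ) :
    HasDerivAt (fun y => ∫ θ in (0:ℝ)..π, Real.cos (y * Real.sin θ))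
      (∫ θ in (0:ℝ)..π, -(Real.sin θ * Real.sin (x * Real.sin θ))) x := by
  refine (intervalIntegral.hasDerivAt_integral_of_dominated_loc_of_deriv_le
    (F := fun y θ => Real.cos (y * Real.sin θ))
    (F' := fun y θ => -(Real.sin θ * Real.sin (y * Real.sin θ)))
    (bound := fun _ => 1) Filter.univ_mem
    (.of_forall fun y => Continuous.aestronglyMeasurable (by fun_prop))
    (Continuous.intervalIntegrable (by fun_prop) _ _)
    (Continuous.aestronglyMeasurable (by fun_prop)) (.of_forall fun θ _ y _ => ?_)
    intervalIntegrable_const (.of_forall fun θ _ y _ => ?_)).2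
  · rw [norm_neg, norm_mul]
    exact mul_le_one₀ (Real.abs_sin_le_one _) (norm_nonneg _) (Real.abs_sin_le_one _)
  · have h := ((hasDerivAt_id' y).mul_const (Real.sin θ)).cos
    rwa [one_mul, neg_mul, mul_comm (Real.sin _)] at h

/-- `J₀` is differentiable on `ℝ` with derivative `-J₁`. -/
theorem besselJ0_hasDerivAt (x : ℝ) : HasDerivAt besselJ0 (-besselJ1 x) x := by
  have h := (hasDerivAt_integral_cos_mul_sin x).const_mul (1 / π)
  rwa [intervalIntegral.integral_neg, ← integral_cos_sub_mul_sin, mul_neg] at h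
end

section
/- Let M ≥ 1 and let G be an M×M complex matrix whose Hermitian part (G + Gᴴ)/2 is positive definite. Then the complex Gaussian integral over ℂ^M (with respect to Lebesgue measure, identifying ℂ^M with ℝ^{2M}) satisfies ∫_{ℂ^M} exp(−wᴴ G w) dw = π^M / det G, where wᴴ G w = ∑_{r,s} conj(w_r) G_{r,s} w_s. -/
open Matrix MeasureTheory
open scoped ComplexOrder

section

variable {ι : Type*} [Fintype ι] [DecidableEq ι]

open scoped MatrixOrder in
/-- A positive definite matrix is congruent to the identity. -/
lemma Matrix.PosDef.exists_conjTranspose_mul_mul_eq_one {H : Matrix ι ι ℂ} (hH : H.PosDef) :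
    ∃ P : Matrix ι ι ℂ, Pᴴ * H * P = 1 := by
  obtain ⟨B, rfl⟩ := CStarAlgebra.nonneg_iff_eq_star_mul_self.mp hH.posSemidef.nonneg
  have hdet : IsUnit B.det := by
    have h := hH.det_pos.ne'
    rw [det_mul] at h
    exact (right_ne_zero_of_mul h).isUnit
  refine ⟨B⁻¹, ?_⟩
  rw [star_eq_conjTranspose, ← Matrix.mul_assoc, ← conjTranspose_mul, mul_nonsing_inv B hdet,
    conjTranspose_one, Matrix.one_mul, mul_nonsing_inv B hdet]

/-- A matrix with positive definite Hermitian part is congruent to a diagonal matrix whose entries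
have real part one. -/
lemma Matrix.exists_conjTranspose_mul_mul_eq_diagonal {G : Matrix ι ι ℂ}
    (hG : (((1 : ℂ) / 2) • (G + Gᴴ)).PosDef) :
    ∃ (P : Matrix ι ι ℂ) (d : ι → ℝ), P.det ≠ 0 ∧
      Pᴴ * G * P = diagonal fun i => 1 + (d i : ℂ) * Complex.I := by
  obtain ⟨Q, hQ⟩ := hG.exists_conjTranspose_mul_mul_eq_one
  set K : Matrix ι ι ℂ := (-Complex.I / 2) • (G - Gᴴ) with hKdef
  have hGK : G = ((1 : ℂ) / 2) • (G + Gᴴ) + Complex.I • K := by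
    ext i j
    simp only [hKdef, Matrix.add_apply, Matrix.smul_apply, Matrix.sub_apply, smul_eq_mul]
    linear_combination (G i j - Gᴴ i j) / 2 * Complex.I_mul_I
  have hK : K.IsHermitian := by
    ext i j
    simp [hKdef, Matrix.conjTranspose_apply]
    ring
  have hQK : (Qᴴ * K * Q).IsHermitian := isHermitian_conjTranspose_mul_mul Q hK
  obtain ⟨U, hUU, hU⟩ : ∃ U : Matrix ι ι ℂ, Uᴴ * U = 1 ∧
      Uᴴ * (Qᴴ * K * Q) * U = diagonal (RCLike.ofReal ∘ hQK.eigenvalues) := by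
    refine ⟨(hQK.eigenvectorUnitary).val, Unitary.coe_star_mul_self hQK.eigenvectorUnitary, ?_⟩
    have h := hQK.conjStarAlgAut_star_eigenvectorUnitary
    rwa [Unitary.conjStarAlgAut_star_apply] at h
  have hdiag : (Q * U)ᴴ * G * (Q * U)
      = diagonal fun i => 1 + (hQK.eigenvalues i : ℂ) * Complex.I := by
    calc (Q * U)ᴴ * G * (Q * U)
        = Uᴴ * (Qᴴ * (((1 : ℂ) / 2) • (G + Gᴴ)) * Q) * U
          + Complex.I • (Uᴴ * (Qᴴ * K * Q) * U) := by
          conv_lhs => rw [hGK]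
          simp only [conjTranspose_mul, Matrix.mul_add, Matrix.add_mul, Matrix.mul_smul,
            Matrix.smul_mul, Matrix.mul_assoc]
      _ = _ := by
          rw [hQ, Matrix.mul_one, hUU, hU]
          ext i j
          by_cases h : i = j
          · subst h; simp [mul_comm]
          · simp [h]
  refine ⟨Q * U, hQK.eigenvalues, ?_, hdiag⟩
  have h1 : IsUnit Q.det := by
    have := congrArg det hQ
    rw [det_mul, det_one] at this
    exact IsUnit.of_mul_eq_one_right _ this
  have h2 : IsUnit U.det := by
    have := congrArg det hUU
    rw [det_mul, det_one] at this
    exact IsUnit.of_mul_eq_one_right _ this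
  rw [det_mul]
  exact (h1.mul h2).ne_zero

/-- Linear change of variables in an integral over `ι → ℂ`. -/
lemma integral_comp_mulVec_complex {E : Type*} [NormedAddCommGroup E] [NormedSpace ℝ E]
    {P : Matrix ι ι ℂ} (hP : P.det ≠ 0) (f : (ι → ℂ) → E) :
    ∫ w, f w = Complex.normSq P.det • ∫ z, f (P *ᵥ z) := by
  set L : (ι → ℂ) →ₗ[ℝ] (ι → ℂ) := (toLin' P).restrictScalars ℝ
  have hL : LinearMap.det L = Complex.normSq P.det := by
    rw [LinearMap.det_restrictScalars, Algebra.norm_complex_apply, LinearMap.det_toLin']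
  have hL0 : LinearMap.det L ≠ 0 := by
    rw [hL]; exact (Complex.normSq_pos.mpr hP).ne'
  have hemb : MeasurableEmbedding L :=
    (LinearMap.equivOfDetNeZero L hL0).toContinuousLinearEquiv.toHomeomorph.measurableEmbedding
  have hmap := hemb.integral_map (μ := volume) f
  rw [Measure.map_linearMap_addHaar_eq_smul_addHaar volume hL0, integral_smul_measure, hL,
    abs_of_nonneg (inv_nonneg.mpr (Complex.normSq_nonneg _)),
    ENNReal.toReal_ofReal (inv_nonneg.mpr (Complex.normSq_nonneg _))] at hmap
  rw [show (fun z => f (P *ᵥ z)) = fun z => f (L z) from rfl, ← hmap,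
    smul_inv_smul₀ (Complex.normSq_pos.mpr hP).ne']

/-- Complex Gaussian integral for a diagonal matrix. -/
lemma integral_cexp_neg_star_dotProduct_diagonal_mulVec {b : ι → ℂ} (hb : ∀ i, 0 < (b i).re) :
    ∫ z : ι → ℂ, Complex.exp (-(star z ⬝ᵥ (diagonal b *ᵥ z))) = ∏ i, (Real.pi : ℂ) / b i := by
  have h : ∀ z : ι → ℂ, Complex.exp (-(star z ⬝ᵥ (diagonal b *ᵥ z)))
      = ∏ i, Complex.exp (-b i * (‖z i‖ : ℂ) ^ 2) := by
    intro z
    rw [← Complex.exp_sum, dotProduct, ← Finset.sum_neg_distrib]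
    congr 1
    refine Finset.sum_congr rfl fun i _ => ?_
    rw [mulVec_diagonal, Pi.star_apply, ← Complex.conj_mul']
    simp only [Complex.star_def]
    ring
  simp_rw [h]
  rw [integral_fintype_prod_volume_eq_prod (fun i (x : ℂ) => Complex.exp (-b i * (‖x‖ : ℂ) ^ 2))]
  refine Finset.prod_congr rfl fun i _ => ?_
  rw [GaussianFourier.integral_cexp_neg_mul_sq_norm (hb i), Complex.finrank_real_complex]
  norm_num

end

/-- Complex Gaussian integral: if the Hermitian part `(G + Gᴴ)/2` of `G` is positive
definite, then `∫_{ℂ^M} exp (-wᴴ G w) dw = π^M / det G`. -/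
theorem complex_gaussian_integral (M : ℕ) (hM : 1 ≤ M)
    (G : Matrix (Fin M) (Fin M) ℂ) (hG : (((1 : ℂ) / 2) • (G + Gᴴ)).PosDef) :
    ∫ w : Fin M → ℂ, Complex.exp (-(star w ⬝ᵥ (G *ᵥ w))) = (Real.pi : ℂ) ^ M / G.det := by
  obtain ⟨P, d, hP, hPG⟩ := exists_conjTranspose_mul_mul_eq_diagonal hG
  have hdet : (Complex.normSq P.det : ℂ) * G.det = ∏ i, (1 + (d i : ℂ) * Complex.I) := by
    rw [← det_diagonal, ← hPG, det_mul, det_mul, det_conjTranspose,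
      Complex.normSq_eq_conj_mul_self, Complex.star_def]
    ring
  have hquad : ∀ z : Fin M → ℂ, star (P *ᵥ z) ⬝ᵥ (G *ᵥ (P *ᵥ z))
      = star z ⬝ᵥ (diagonal (fun i => 1 + (d i : ℂ) * Complex.I) *ᵥ z) := by
    intro z
    rw [← hPG, star_mulVec, ← dotProduct_mulVec, mulVec_mulVec, mulVec_mulVec, Matrix.mul_assoc]
  have hnorm : (Complex.normSq P.det : ℂ) ≠ 0 := by
    exact_mod_cast (Complex.normSq_pos.mpr hP).ne'
  rw [integral_comp_mulVec_complex hP]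
  simp_rw [hquad]
  rw [integral_cexp_neg_star_dotProduct_diagonal_mulVec (by simp), Finset.prod_div_distrib, ← hdet,
    Finset.prod_const, Finset.card_univ, Fintype.card_fin, Complex.real_smul,
    ← mul_div_assoc, mul_div_mul_left _ _ hnorm]
end

section
/- Let M ≥ 1, let Q be an M×M complex Hermitian positive definite matrix, let F be an M×M complex Hermitian matrix, and let t₁, t₂ ∈ ℝ. Then (π^M det Q)⁻¹ ∫_{ℂ^M} exp(i t₁ (wᴴ F w) + i t₂ (wᴴ w)) · exp(−wᴴ Q⁻¹ w) dw = (det Q · det(Q⁻¹ − i t₁ F − i t₂ I))⁻¹; that is, the joint characteristic function of the quadratic forms S = wᴴ F w and P = wᴴ w under the complex Gaussian density π^{−M} (det Q)⁻¹ exp(−wᴴ Q⁻¹ w) equals 1/(det Q · det(Q⁻¹ − i t₁ F − i t₂ I)). -/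
open Matrix MeasureTheory Complex
open scoped ComplexOrder

/-- A complex matrix acts on Lebesgue measure by the factor `|det C|²`. -/
theorem integral_comp_mulVec {n : Type*} [Fintype n] [DecidableEq n]
    (C : Matrix n n ℂ) (hC : C.det ≠ 0) (f : (n → ℂ) → ℂ) :
    ∫ w, f w = (normSq C.det : ℂ) * ∫ z, f (C *ᵥ z) := by
  set L : (n → ℂ) →ₗ[ℝ] (n → ℂ) := (Matrix.toLin' C).restrictScalars ℝ with hL
  have hdet : LinearMap.det L = normSq C.det := by
    rw [hL, LinearMap.det_restrictScalars, LinearMap.det_toLin', Algebra.norm_complex_apply]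
  have hpos : 0 < normSq C.det := normSq_pos.mpr hC
  have hdet0 : LinearMap.det L ≠ 0 := by rw [hdet]; exact hpos.ne'
  have hemb : MeasurableEmbedding L :=
    (LinearMap.equivOfDetNeZero L hdet0).toContinuousLinearEquiv.toHomeomorph.measurableEmbedding
  have hmap : ∫ z, f (C *ᵥ z) = ∫ w, f w ∂(Measure.map L volume) :=
    (hemb.integral_map f).symm
  rw [hmap, Measure.map_linearMap_addHaar_eq_smul_addHaar volume hdet0, integral_smul_measure,
    ENNReal.toReal_ofReal (abs_nonneg _), hdet, abs_of_pos (inv_pos.mpr hpos), real_smul,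
    ofReal_inv, mul_inv_cancel_left₀ (ofReal_ne_zero.mpr hpos.ne')]

/-- The Gaussian integral over `ℂⁿ` for a diagonal quadratic form. -/
theorem integral_cexp_neg_diagonal {n : Type*} [Fintype n] [DecidableEq n]
    (b : n → ℂ) (hb : ∀ i, 0 < (b i).re) :
    ∫ z : n → ℂ, cexp (-(star z ⬝ᵥ (diagonal b *ᵥ z))) =
      (Real.pi : ℂ) ^ Fintype.card n * (∏ i, b i)⁻¹ := by
  have hexp (z : n → ℂ) : cexp (-(star z ⬝ᵥ (diagonal b *ᵥ z))) =
      ∏ i, cexp (-b i * (‖z i‖ : ℂ) ^ 2) := by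
    rw [← Complex.exp_sum, dotProduct, ← Finset.sum_neg_distrib]
    refine congrArg cexp (Finset.sum_congr rfl fun i _ => ?_)
    rw [mulVec_diagonal, Pi.star_apply, ← conj_mul' (z i), starRingEnd_apply]
    ring
  simp_rw [hexp]
  rw [integral_fintype_prod_volume_eq_prod (fun i (x : ℂ) => cexp (-b i * (‖x‖ : ℂ) ^ 2))]
  simp_rw [fun i => GaussianFourier.integral_cexp_neg_mul_sq_norm (V := ℂ) (hb i),
    Complex.finrank_real_complex]
  simp [div_eq_mul_inv, Finset.prod_mul_distrib]

/-- The Gaussian integral over `ℂⁿ` for a form that is diagonalized by a congruence. -/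
theorem integral_cexp_neg_of_congruent_diagonal {n : Type*} [Fintype n] [DecidableEq n]
    {G C : Matrix n n ℂ} {b : n → ℂ} (hC : C.det ≠ 0) (hG : Cᴴ * G * C = diagonal b)
    (hb : ∀ i, 0 < (b i).re) :
    ∫ w : n → ℂ, cexp (-(star w ⬝ᵥ (G *ᵥ w))) =
      (Real.pi : ℂ) ^ Fintype.card n * G.det⁻¹ := by
  have hform (z : n → ℂ) :
      star (C *ᵥ z) ⬝ᵥ (G *ᵥ (C *ᵥ z)) = star z ⬝ᵥ (diagonal b *ᵥ z) := by
    rw [← hG, star_mulVec, ← dotProduct_mulVec, mulVec_mulVec, mulVec_mulVec, mul_assoc]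
  have hdet : (normSq C.det : ℂ) * G.det = ∏ i, b i := by
    rw [← det_diagonal, ← hG, det_mul, det_mul, det_conjTranspose, normSq_eq_conj_mul_self,
      starRingEnd_apply]
    ring
  have hN : (normSq C.det : ℂ) ≠ 0 := ofReal_ne_zero.mpr (normSq_pos.mpr hC).ne'
  rw [integral_comp_mulVec C hC]
  simp_rw [hform]
  rw [integral_cexp_neg_diagonal b hb, ← hdet, mul_inv, mul_left_comm,
    mul_inv_cancel_left₀ hN]

/-- A positive definite matrix and a Hermitian matrix are simultaneously diagonalized by a
congruence, which turns the inverse of the former into the identity. -/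
theorem Matrix.PosDef.exists_congruence_diagonal {n : Type*} [Fintype n] [DecidableEq n]
    {Q H : Matrix n n ℂ} (hQ : Q.PosDef) (hH : H.IsHermitian) :
    ∃ (C : Matrix n n ℂ) (d : n → ℝ), C.det ≠ 0 ∧ Cᴴ * Q⁻¹ * C = 1 ∧
      Cᴴ * H * C = diagonal fun i => (d i : ℂ) := by
  obtain ⟨B, rfl⟩ : ∃ B : Matrix n n ℂ, Q = Bᴴ * B := by
    open scoped MatrixOrder in
    exact CStarAlgebra.nonneg_iff_eq_star_mul_self.mp hQ.posSemidef.nonneg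
  have hB : B.det ≠ 0 := fun h => hQ.det_pos.ne' (by rw [det_mul, h, mul_zero])
  have hBu : IsUnit B.det := hB.isUnit
  have hBHu : IsUnit Bᴴ.det := by rw [det_conjTranspose]; exact hBu.star
  have hK : (B * H * Bᴴ).IsHermitian := isHermitian_mul_mul_conjTranspose B hH
  have hU : (hK.eigenvectorUnitary : Matrix n n ℂ)ᴴ * hK.eigenvectorUnitary = 1 :=
    Unitary.coe_star_mul_self hK.eigenvectorUnitary
  have hdiag := hK.conjStarAlgAut_star_eigenvectorUnitary
  rw [Unitary.conjStarAlgAut_star_apply] at hdiag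
  generalize (hK.eigenvectorUnitary : Matrix n n ℂ) = U at hU hdiag
  refine ⟨Bᴴ * U, hK.eigenvalues, ?_, ?_, ?_⟩
  · rw [det_mul]
    exact mul_ne_zero hBHu.ne_zero (isUnit_det_of_left_inverse hU).ne_zero
  · rw [conjTranspose_mul, conjTranspose_conjTranspose, Matrix.mul_inv_rev]
    calc Uᴴ * B * (B⁻¹ * Bᴴ⁻¹) * (Bᴴ * U) = Uᴴ * (B * B⁻¹) * (Bᴴ⁻¹ * Bᴴ) * U := by
          simp only [mul_assoc]
      _ = 1 := by rw [mul_nonsing_inv _ hBu, nonsing_inv_mul _ hBHu, mul_one, mul_one, hU]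
  · rw [conjTranspose_mul, conjTranspose_conjTranspose]
    calc Uᴴ * B * H * (Bᴴ * U) = Uᴴ * (B * H * Bᴴ) * U := by simp only [mul_assoc]
      _ = _ := hdiag

/-- Joint characteristic function of the quadratic forms `S = wᴴ F w` and `P = wᴴ w`
under the complex Gaussian density `π^{-M} (det Q)⁻¹ exp (-wᴴ Q⁻¹ w)`:
`(π^M det Q)⁻¹ ∫ exp (i t₁ wᴴFw + i t₂ wᴴw) exp (-wᴴ Q⁻¹ w) dw
  = (det Q · det (Q⁻¹ - i t₁ F - i t₂ I))⁻¹`. -/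
theorem joint_characteristic_function_quadratic_forms (M : ℕ) (hM : 1 ≤ M)
    (Q F : Matrix (Fin M) (Fin M) ℂ) (hQ : Q.PosDef) (hF : F.IsHermitian) (t₁ t₂ : ℝ) :
    ((Real.pi : ℂ) ^ M * Q.det)⁻¹ *
        ∫ w : Fin M → ℂ,
          Complex.exp (Complex.I * t₁ * (star w ⬝ᵥ (F *ᵥ w)) +
              Complex.I * t₂ * (star w ⬝ᵥ w)) *
            Complex.exp (-(star w ⬝ᵥ (Q⁻¹ *ᵥ w))) =
      (Q.det * (Q⁻¹ - (Complex.I * t₁) • F - (Complex.I * t₂) • 1).det)⁻¹ := by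
  have hH : ((t₁ : ℂ) • F + (t₂ : ℂ) • 1).IsHermitian := by
    rw [IsHermitian, conjTranspose_add, conjTranspose_smul, conjTranspose_smul, hF.eq,
      conjTranspose_one]
    simp
  obtain ⟨C, d, hC, hCQ, hCH⟩ := hQ.exists_congruence_diagonal hH
  have hG : Cᴴ * (Q⁻¹ - (I * t₁) • F - (I * t₂) • 1) * C =
      diagonal fun i => 1 - I * (d i : ℂ) := by
    have hsplit : Q⁻¹ - (I * t₁) • F - (I * t₂) • (1 : Matrix (Fin M) (Fin M) ℂ) =
        Q⁻¹ - I • ((t₁ : ℂ) • F + (t₂ : ℂ) • 1) := by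
      rw [smul_add, smul_smul, smul_smul, sub_sub]
    rw [hsplit, mul_sub, sub_mul, hCQ, Matrix.mul_smul, Matrix.smul_mul, hCH, ← diagonal_one,
      ← diagonal_smul, ← diagonal_sub]
    rfl
  have hexp (w : Fin M → ℂ) :
      cexp (I * t₁ * (star w ⬝ᵥ (F *ᵥ w)) + I * t₂ * (star w ⬝ᵥ w)) *
          cexp (-(star w ⬝ᵥ (Q⁻¹ *ᵥ w))) =
        cexp (-(star w ⬝ᵥ ((Q⁻¹ - (I * t₁) • F - (I * t₂) • 1) *ᵥ w))) := by
    rw [← Complex.exp_add, sub_mulVec, sub_mulVec, smul_mulVec, smul_mulVec, one_mulVec,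
      dotProduct_sub, dotProduct_sub, dotProduct_smul, dotProduct_smul, smul_eq_mul, smul_eq_mul]
    ring_nf
  simp_rw [hexp]
  have hpi : (Real.pi : ℂ) ^ M ≠ 0 := pow_ne_zero _ (ofReal_ne_zero.mpr Real.pi_ne_zero)
  rw [integral_cexp_neg_of_congruent_diagonal hC hG (by simp), Fintype.card_fin, mul_inv, mul_inv,
    mul_mul_mul_comm, inv_mul_cancel₀ hpi, one_mul]
end
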